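/- There exists a constant C depending only on d such that the following holds: if O is a finite family of bounded nonempty objects in ℝ^d with density ρ, and F is an (ℓ,t)-shallow packing of O with t, ℓ ≥ 1, then the induced object set { ⋃_{o ∈ c} o : c ∈ F } has density at most C·ℓ·ρ·(t+1)^C. -/

import Mathlib

/-- A finite family `O` of subsets of `ℝ^d` has density at most `ρ` if every bounded
subset `b` of `ℝ^d` intersects at most `ρ` members of `O` whose diameter is at least
the diameter of `b`. -/
def FamilyDensityLE (d : ℕ) (O : Set (Set (EuclideanSpace ℝ (Fin d)))) (ρ : ℝ) : Prop :=
  ∀ b : Set (EuclideanSpace ℝ (Fin d)), Bornology.IsBounded b →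
    ({o ∈ O | (o ∩ b).Nonempty ∧ Metric.diam b ≤ Metric.diam o}.ncard : ℝ) ≤ ρ

/-- The intersection graph of a family of objects. -/
def InterGraph {d : ℕ} (O : Set (Set (EuclideanSpace ℝ (Fin d)))) : SimpleGraph O :=
  SimpleGraph.fromRel fun o o' => ((o : Set (EuclideanSpace ℝ (Fin d))) ∩ o').Nonempty

/-- A graph is `t`-shallow if some vertex reaches every other vertex by a path of at most
`t` edges (graph radius at most `t`). -/
def IsShallowGraph {V : Type*} (G : SimpleGraph V) (t : ℕ) : Prop :=
  ∃ h : V, ∀ v : V, G.Reachable h v ∧ G.dist h v ≤ t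

lemma walk_aux {d : ℕ} (A : Set (Set (EuclideanSpace ℝ (Fin d))))
    (hb : ∀ o ∈ A, Bornology.IsBounded o) (r : ℝ) (hr : 0 ≤ r) {u v : A}
    (w : (InterGraph A).Walk u v) : ∀ x ∈ u.1, ∀ y ∈ v.1,
      dist x y ≤ (w.length + 1) * r ∨
        ∃ o ∈ A, r ≤ Metric.diam o ∧ ∃ z ∈ o, dist x z ≤ w.length * r := by
  induction w with
  | nil =>
    rename_i u
    intro x hx y hy
    by_cases h : r ≤ Metric.diam u.1
    · exact Or.inr ⟨u.1, u.2, h, x, hx, by simp⟩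
    · left
      have := Metric.dist_le_diam_of_mem (hb _ u.2) hx hy
      simp
      linarith
  | cons hadj p ih =>
    rename_i u v' w'
    intro x hx y hy
    by_cases h : r ≤ Metric.diam u.1
    · exact Or.inr ⟨u.1, u.2, h, x, hx, by simp; positivity⟩
    · have hz : ∃ z, z ∈ u.1 ∧ z ∈ v'.1 := by
        have h2 := hadj
        simp only [InterGraph, SimpleGraph.fromRel_adj] at h2
        rcases h2.2 with ⟨z, hz⟩ | ⟨z, hz⟩
        · exact ⟨z, hz.1, hz.2⟩
        · exact ⟨z, hz.2, hz.1⟩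
      obtain ⟨z, hzu, hzv⟩ := hz
      have hxz := Metric.dist_le_diam_of_mem (hb _ u.2) hx hzu
      rcases ih z hzv y hy with h1 | ⟨o, ho, hor, z', hz', hd⟩
      · left
        have := dist_triangle x z y
        simp only [SimpleGraph.Walk.length_cons]
        push_cast
        linarith
      · right
        refine ⟨o, ho, hor, z', hz', ?_⟩
        have := dist_triangle x z z'
        simp only [SimpleGraph.Walk.length_cons]
        push_cast
        linarith

lemma count_aux {d : ℕ} (O : Set (Set (EuclideanSpace ℝ (Fin d)))) (ρ : ℝ)
    (I : Type) [Fintype I] (F : I → Set (Set (EuclideanSpace ℝ (Fin d)))) (ℓ : ℕ)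
    (hO : O.Finite) (hρ : FamilyDensityLE d O ρ) (hF : ∀ i, F i ⊆ O)
    (hl : ∀ o ∈ O, ({i | o ∈ F i}).ncard ≤ ℓ)
    {K : Type} [Fintype K] (B : K → Set (EuclideanSpace ℝ (Fin d)))
    (hB : ∀ k, Bornology.IsBounded (B k)) (J : Set I)
    (hJ : ∀ i ∈ J, ∃ o ∈ F i, ∃ k, (o ∩ B k).Nonempty ∧ Metric.diam (B k) ≤ Metric.diam o) :
    (J.ncard : ℝ) ≤ Fintype.card K * ℓ * ρ := by
  classical
  have hfin : ∀ k, {o ∈ O | (o ∩ B k).Nonempty ∧ Metric.diam (B k) ≤ Metric.diam o}.Finite :=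
    fun k => hO.subset (Set.sep_subset _ _)
  set S : K → Finset (Set (EuclideanSpace ℝ (Fin d))) := fun k => (hfin k).toFinset with hS
  have hScard : ∀ k, ((S k).card : ℝ) ≤ ρ := by
    intro k
    rw [hS, ← Set.ncard_eq_toFinset_card _ (hfin k)]
    exact hρ _ (hB k)
  have hsub : J ⊆ ((Finset.univ.biUnion fun k => (S k).biUnion fun o =>
      (Finset.univ.filter fun i => o ∈ F i) : Finset I) : Set I) := by
    intro i hi
    obtain ⟨o, ho, k, h1, h2⟩ := hJ i hi
    simp only [Finset.coe_biUnion, Set.mem_iUnion, Finset.mem_coe, Finset.mem_univ, exists_prop,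
      true_and, Finset.mem_filter, hS, Set.Finite.mem_toFinset]
    exact ⟨k, o, ⟨hF i ho, h1, h2⟩, ho⟩
  have h1 := Set.ncard_le_ncard hsub (Finset.finite_toSet _)
  rw [Set.ncard_coe_finset] at h1
  have h2 : (Finset.univ.biUnion fun k => (S k).biUnion fun o =>
      (Finset.univ.filter fun i => o ∈ F i) : Finset I).card ≤ ∑ k : K, (S k).card * ℓ := by
    refine Finset.card_biUnion_le.trans (Finset.sum_le_sum fun k _ => ?_)
    refine Finset.card_biUnion_le_card_mul _ _ _ fun o ho => ?_
    have ho' : o ∈ O := by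
      simp only [hS, Set.Finite.mem_toFinset] at ho
      exact ho.1
    have := hl o ho'
    rw [Set.ncard_eq_toFinset_card'] at this
    convert this using 2
    ext; simp
  calc (J.ncard : ℝ) ≤ ((∑ k : K, (S k).card * ℓ : ℕ) : ℝ) := by exact_mod_cast h1.trans h2
    _ = ∑ k : K, ((S k).card : ℝ) * ℓ := by push_cast; rfl
    _ ≤ ∑ k : K, ρ * ℓ := by
        refine Finset.sum_le_sum fun k _ => ?_
        exact mul_le_mul_of_nonneg_right (hScard k) (by positivity)
    _ = _ := by simp; ring

lemma cover_aux (d M : ℕ) (p : EuclideanSpace ℝ (Fin d)) (R s : ℝ) (hs : 0 < s)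
    (hR : R = M * s) :
    ∃ B : (Fin d → Fin (2 * M + 1)) → Set (EuclideanSpace ℝ (Fin d)),
      (∀ k, Bornology.IsBounded (B k)) ∧ (∀ k, Metric.diam (B k) ≤ (d + 1) * s) ∧
      ∀ x, dist x p ≤ R → ∃ k, x ∈ B k := by
  set B : (Fin d → Fin (2 * M + 1)) → Set (EuclideanSpace ℝ (Fin d)) :=
    fun k => {x | ∀ i, ⌊(x i - p i) / s⌋ = ((k i : ℕ) : ℤ) - M} with hBdef
  have hd : ∀ k, ∀ x ∈ B k, ∀ y ∈ B k, dist x y ≤ (d + 1) * s := by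
    intro k x hx y hy
    rw [EuclideanSpace.dist_eq]
    apply Real.sqrt_le_iff.2 ⟨by positivity, ?_⟩
    calc ∑ i, dist (x i) (y i) ^ 2 ≤ ∑ i : Fin d, s ^ 2 := by
          refine Finset.sum_le_sum fun i _ => ?_
          have h : dist (x i) (y i) ≤ s := by
            have h1 := Int.abs_sub_lt_one_of_floor_eq_floor ((hx i).trans (hy i).symm)
            rw [← sub_div, abs_div, abs_of_pos hs, div_lt_one hs] at h1
            rw [Real.dist_eq]
            have : x i - p i - (y i - p i) = x i - y i := by ring
            rw [this] at h1
            exact h1.le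
          exact pow_le_pow_left₀ dist_nonneg h 2
      _ = d * s ^ 2 := by simp
      _ ≤ ((d + 1) * s) ^ 2 := by
          have : (0:ℝ) ≤ d := by positivity
          nlinarith [sq_nonneg s, mul_nonneg this (sq_nonneg s), mul_nonneg (mul_nonneg this this) (sq_nonneg s)]
  refine ⟨B, fun k => Metric.isBounded_iff.2 ⟨_, fun x hx y hy => hd k x hx y hy⟩,
    fun k => Metric.diam_le_of_forall_dist_le (by positivity) (hd k), ?_⟩
  intro x hx
  have hc : ∀ i, |(x i - p i) / s| ≤ M := by
    intro i
    rw [abs_div, abs_of_pos hs, div_le_iff₀ hs, ← hR]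
    refine le_trans ?_ hx
    rw [dist_eq_norm]
    have := PiLp.norm_apply_le (x - p) i
    simpa using this
  have hlo : ∀ i, -(M : ℤ) ≤ ⌊(x i - p i) / s⌋ := by
    intro i
    apply Int.le_floor.2
    push_cast
    exact (abs_le.1 (hc i)).1
  have hhi : ∀ i, ⌊(x i - p i) / s⌋ ≤ (M : ℤ) := by
    intro i
    have : (⌊(x i - p i) / s⌋ : ℝ) ≤ M := (Int.floor_le _).trans (abs_le.1 (hc i)).2
    exact_mod_cast this
  refine ⟨fun i => ⟨(⌊(x i - p i) / s⌋ + M).toNat, ?_⟩, ?_⟩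
  · have := hlo i; have := hhi i; omega
  · intro i
    have := hlo i
    simp only
    omega

theorem stmt15 (d : ℕ) :
    ∃ C : ℕ, 0 < C ∧
      ∀ (O : Set (Set (EuclideanSpace ℝ (Fin d)))) (ρ : ℝ)
        (I : Type) [Fintype I] (F : I → Set (Set (EuclideanSpace ℝ (Fin d)))) (ℓ t : ℕ),
        O.Finite → (∀ o ∈ O, Bornology.IsBounded o) → (∀ o ∈ O, o.Nonempty) →
        FamilyDensityLE d O ρ → 1 ≤ ℓ → 1 ≤ t →
        (∀ i, F i ⊆ O) →
        (∀ i, IsShallowGraph (InterGraph (F i)) t) →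
        (∀ o ∈ O, ({i | o ∈ F i}).ncard ≤ ℓ) →
        FamilyDensityLE d (Set.range fun i => ⋃₀ F i)
          ((C : ℝ) * (ℓ : ℝ) * ρ * ((t : ℝ) + 1) ^ C) := by
  refine ⟨(17 * (d + 1)) ^ d + d, by positivity, ?_⟩
  intro O ρ I _ F ℓ t hO hbd _ hρ _ _ hF hsh hl b hb
  set C : ℕ := (17 * (d + 1)) ^ d + d with hC
  have hρ0 : 0 ≤ ρ := le_trans (by positivity) (hρ ∅ Bornology.isBounded_empty)
  set J : Set I := {i | (⋃₀ F i ∩ b).Nonempty ∧ Metric.diam b ≤ Metric.diam (⋃₀ F i)} with hJ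
  have hJle : (({o ∈ Set.range fun i => ⋃₀ F i | (o ∩ b).Nonempty ∧
      Metric.diam b ≤ Metric.diam o}.ncard : ℕ) : ℝ) ≤ J.ncard := by
    have hsub : {o ∈ Set.range fun i => ⋃₀ F i | (o ∩ b).Nonempty ∧
      Metric.diam b ≤ Metric.diam o} ⊆ (fun i => ⋃₀ F i) '' J := by
      rintro o ⟨⟨i, rfl⟩, h⟩
      exact ⟨i, h, rfl⟩
    exact_mod_cast (Set.ncard_le_ncard hsub (Set.toFinite _)).trans
      (Set.ncard_image_le (Set.toFinite _))
  refine hJle.trans ?_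
  -- reduce to a covering of size at most `C (t+1)^C`
  have key : ∀ (K : Type) [Fintype K] (B : K → Set (EuclideanSpace ℝ (Fin d))),
      Fintype.card K ≤ C * (t + 1) ^ C → (∀ k, Bornology.IsBounded (B k)) →
      (∀ i ∈ J, ∃ o ∈ F i, ∃ k, (o ∩ B k).Nonempty ∧ Metric.diam (B k) ≤ Metric.diam o) →
      (J.ncard : ℝ) ≤ (C : ℝ) * (ℓ : ℝ) * ρ * ((t : ℝ) + 1) ^ C := by
    intro K _ B hK hB hcov
    refine (count_aux O ρ I F ℓ hO hρ hF hl B hB J hcov).trans ?_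
    have hK' : (Fintype.card K : ℝ) ≤ C * ((t : ℝ) + 1) ^ C := by exact_mod_cast hK
    calc (Fintype.card K : ℝ) * ℓ * ρ = Fintype.card K * (ℓ * ρ) := by ring
      _ ≤ (C * ((t : ℝ) + 1) ^ C) * (ℓ * ρ) :=
        mul_le_mul_of_nonneg_right hK' (by positivity)
      _ = _ := by ring
  have hC1 : 1 ≤ C := by
    have : 0 < (17 * (d + 1)) ^ d := by positivity
    omega
  rcases (Metric.diam_nonneg (s := b)).eq_or_lt with hD | hD
  · refine key Unit (fun _ => b) ?_ (fun _ => hb) ?_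
    · simpa using Nat.mul_le_mul hC1 (Nat.one_le_pow C (t + 1) (by omega))
    · rintro i ⟨⟨x, ⟨o, ho, hxo⟩, hxb⟩, -⟩
      exact ⟨o, ho, (), ⟨x, hxo, hxb⟩, by rw [← hD]; exact Metric.diam_nonneg⟩
  set D := Metric.diam b with hDdef
  obtain ⟨p, hp⟩ : b.Nonempty := by
    by_contra h
    rw [Set.not_nonempty_iff_eq_empty] at h
    rw [hDdef, h, Metric.diam_empty] at hD
    exact lt_irrefl _ hD
  set r : ℝ := D / (4 * (t + 1)) with hr
  have hr0 : 0 < r := by positivity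
  have hDr : D = (4 * (t + 1)) * r := by rw [hr]; field_simp
  obtain ⟨B, hB1, hB2, hB3⟩ := cover_aux d (8 * (d + 1) * (t + 1)) p (2 * D) (r / (d + 1))
    (by positivity) (by rw [hDr]; push_cast; field_simp; ring)
  refine key _ B ?_ hB1 ?_
  · rw [Fintype.card_fun, Fintype.card_fin, Fintype.card_fin]
    calc (2 * (8 * (d + 1) * (t + 1)) + 1) ^ d ≤ (17 * (d + 1) * (t + 1)) ^ d := by
          apply Nat.pow_le_pow_left
          nlinarith [Nat.zero_le (d * t)]
      _ = (17 * (d + 1)) ^ d * (t + 1) ^ d := by rw [mul_pow]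
      _ ≤ C * (t + 1) ^ C :=
          Nat.mul_le_mul (by omega) (Nat.pow_le_pow_right (by omega) (by omega))
  · rintro i ⟨⟨x, ⟨o, ho, hxo⟩, hxb⟩, hdiam⟩
    have hbdF : ∀ o ∈ F i, Bornology.IsBounded o := fun o ho => hbd o (hF i ho)
    obtain ⟨h, hh⟩ := hsh i
    have hwalk : ∀ v : F i, ∃ w : (InterGraph (F i)).Walk ⟨o, ho⟩ v, (w.length : ℝ) ≤ 2 * t := by
      intro v
      obtain ⟨w1, hw1⟩ := (hh ⟨o, ho⟩).1.exists_walk_length_eq_dist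
      obtain ⟨w2, hw2⟩ := (hh v).1.exists_walk_length_eq_dist
      refine ⟨w1.reverse.append w2, ?_⟩
      have h1 := (hh ⟨o, ho⟩).2
      have h2 := (hh v).2
      have : (w1.reverse.append w2).length ≤ 2 * t := by
        rw [SimpleGraph.Walk.length_append, SimpleGraph.Walk.length_reverse]
        omega
      exact_mod_cast this
    have hex : ∃ o' ∈ F i, r ≤ Metric.diam o' ∧ ∃ z ∈ o', dist x z ≤ 2 * t * r := by
      by_contra hno
      have hall : ∀ y ∈ ⋃₀ F i, dist x y ≤ (2 * t + 1) * r := by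
        rintro y ⟨o', ho', hy⟩
        obtain ⟨w, hw⟩ := hwalk ⟨o', ho'⟩
        rcases walk_aux (F i) hbdF r hr0.le w x hxo y hy with h1 | ⟨o2, ho2, h2, z, hz, h3⟩
        · exact h1.trans (mul_le_mul_of_nonneg_right (by linarith) hr0.le)
        · exact absurd ⟨o2, ho2, h2, z, hz, h3.trans (mul_le_mul_of_nonneg_right hw hr0.le)⟩ hno
      have : Metric.diam (⋃₀ F i) ≤ 2 * ((2 * t + 1) * r) := by
        refine Metric.diam_le_of_forall_dist_le (by positivity) fun y hy z hz => ?_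
        have := dist_triangle_left y z x
        have := hall y hy
        have := hall z hz
        linarith
      nlinarith
    obtain ⟨o', ho', hro', z, hz, hxz⟩ := hex
    obtain ⟨k, hk⟩ := hB3 z (by
      have h1 := dist_triangle_left z p x
      have h2 := Metric.dist_le_diam_of_mem hb hxb hp
      nlinarith)
    refine ⟨o', ho', k, ⟨z, hz, hk⟩, (hB2 k).trans (le_trans (le_of_eq ?_) hro')⟩
    field_simp
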